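/- arXiv:0807.1838 — 3 statements merged into one kernel-verified Lean document; each statement's English description precedes it below -/
import Mathlib

section
/- Let J ⊆ I be ideals in ℂ[x] = ℂ[x₁,…,xₙ] with dim_ℂ ℂ[x]/(J:I) < ∞, and let {p₁,…,pₛ} = V(J) \ V(I) (a finite set). Then there exists a positive integer k such that the natural map induces a ℂ-algebra isomorphism ℂ[x]/J ≅ ℂ[x]/(J+Iᵏ) × ℂ[x]/(J+m_{p₁}ᵏ) × ⋯ × ℂ[x]/(J+m_{pₛ}ᵏ); in particular J = (J+Iᵏ) ∩ (J+m_{p₁}ᵏ) ∩ ⋯ ∩ (J+m_{pₛ}ᵏ). Moreover the same conclusion holds for every integer larger than k. -/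
open MvPolynomial

/-- The zero set `V(S)` of an ideal of `ℂ[x₁,…,xₙ]`. -/
def zeroSet {n : ℕ} (S : Ideal (MvPolynomial (Fin n) ℂ)) : Set (Fin n → ℂ) :=
  {p | ∀ f ∈ S, eval p f = 0}

/-- The maximal ideal `m_p` generated by `x₁ - p₁, …, xₙ - pₙ`. -/
noncomputable def mIdeal {n : ℕ} (p : Fin n → ℂ) : Ideal (MvPolynomial (Fin n) ℂ) :=
  Ideal.span (Set.range fun i => X i - C (p i))

/-!
Every maximal ideal containing `J` either contains `I` or is one of the maximal ideals `mᵢ` that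
contain `J` but not `I`. In a Jacobson ring this says `I * ∏ mᵢ ≤ √J`, so in a Noetherian one
`I ^ l * ∏ mᵢ ^ l ≤ J` for all large `l`. The ideals `I ^ l`, `mᵢ ^ l` are pairwise coprime, hence
`J = J + I ^ l * ∏ mᵢ ^ l = (J + I ^ l) ⊓ ⨅ i, (J + mᵢ ^ l)`, and the Chinese remainder theorem
applies. For `ℂ[x₁,…,xₙ]`, the Nullstellensatz identifies the `mᵢ` with the points of
`V(J) \ V(I)`.
-/

open Function

section CommRing

variable {R ι : Type*} [CommRing R]

theorem isCoprime_add_add (J : Ideal R) {A B : Ideal R} (h : IsCoprime A B) :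
    IsCoprime (J + A) (J + B) :=
  Ideal.isCoprime_iff_codisjoint.mpr (h.codisjoint.mono le_sup_right le_sup_right)

theorem add_mul_eq_inf_of_isCoprime (J : Ideal R) {A B : Ideal R} (h : IsCoprime A B) :
    J + A * B = (J + A) ⊓ (J + B) := by
  apply le_antisymm
  · exact le_inf (sup_le_sup_left Ideal.mul_le_left _) (sup_le_sup_left Ideal.mul_le_right _)
  · calc (J + A) ⊓ (J + B) = (J + A) * (J + B) :=
          (Ideal.mul_eq_inf_of_isCoprime (isCoprime_add_add J h)).symm
      _ = J * (J + B + A) + A * B := by ring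
      _ ≤ J + A * B := sup_le_sup_right Ideal.mul_le_left _

theorem add_prod_eq_iInf_of_pairwise_isCoprime (J : Ideal R) {B : ι → Ideal R} (s : Finset ι)
    (h : (s : Set ι).Pairwise (IsCoprime on B)) :
    J + ∏ i ∈ s, B i = ⨅ i ∈ s, (J + B i) := by
  classical
  induction s using Finset.induction_on with
  | empty => simp
  | insert a s ha ih =>
    have hprod : IsCoprime (B a) (∏ i ∈ s, B i) := IsCoprime.prod_right fun i hi =>
      h (s.mem_insert_self a) (Finset.mem_insert_of_mem hi) (ne_of_mem_of_not_mem hi ha).symm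
    rw [Finset.prod_insert ha, Finset.iInf_insert, add_mul_eq_inf_of_isCoprime J hprod,
      ih (h.mono (Finset.coe_subset.mpr (s.subset_insert a)))]

/-- The Chinese remainder isomorphism for an ideal `A` and a finite family `B` of ideals, with the
factor `R ⧸ A` kept apart from the others. -/
noncomputable def quotientInfIInfEquivProdPi (S : Type*) [CommSemiring S] [Algebra S R] [Finite ι]
    (A : Ideal R) (B : ι → Ideal R) (hA : IsCoprime A (⨅ i, B i))
    (hB : Pairwise (IsCoprime on B)) :
    (R ⧸ A ⊓ ⨅ i, B i) ≃ₐ[S] (R ⧸ A) × ∀ i, R ⧸ B i :=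
  .ofRingEquiv (f := (Ideal.quotientInfEquivQuotientProd A (⨅ i, B i) hA).trans
    (.prodCongr (.refl _) (Ideal.quotientInfRingEquivPiQuotient B hB))) fun _ => rfl

theorem isCoprime_of_isMaximal_of_not_le {I M : Ideal R} (hM : M.IsMaximal) (h : ¬ I ≤ M) :
    IsCoprime I M :=
  Ideal.isCoprime_iff_codisjoint.mpr (hM.out.not_le_iff_codisjoint.mp h).symm

theorem mul_prod_le_radical [IsJacobsonRing R] [Fintype ι] {J I : Ideal R} {m : ι → Ideal R}
    (hm : {M : Ideal R | M.IsMaximal ∧ J ≤ M ∧ ¬ I ≤ M} ⊆ Set.range m) :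
    I * ∏ i, m i ≤ J.radical := by
  rw [Ideal.radical_eq_jacobson]
  refine le_sInf fun M ⟨hJM, hM⟩ => ?_
  by_cases hIM : I ≤ M
  · exact Ideal.mul_le_left.trans hIM
  · obtain ⟨i, rfl⟩ := hm ⟨hM, hJM, hIM⟩
    exact Ideal.mul_le_right.trans (Ideal.prod_le_inf.trans (Finset.inf_le (Finset.mem_univ i)))

theorem exists_pow_mul_prod_pow_le [IsNoetherianRing R] [Fintype ι] {J I : Ideal R}
    {m : ι → Ideal R} (h : I * ∏ i, m i ≤ J.radical) :
    ∃ k : ℕ, 0 < k ∧ ∀ l, k ≤ l → I ^ l * ∏ i, m i ^ l ≤ J := by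
  obtain ⟨k, hk⟩ := Ideal.exists_pow_le_of_le_radical_of_fg h (IsNoetherian.noetherian _)
  refine ⟨k + 1, k.succ_pos, fun l hl => ?_⟩
  rw [Finset.prod_pow, ← mul_pow]
  exact (Ideal.pow_le_pow_right (by lia)).trans hk

theorem stmt_0_general (S : Type*) [CommSemiring S] [Algebra S R] [IsNoetherianRing R]
    [IsJacobsonRing R] [Finite ι] (J I : Ideal R) (m : ι → Ideal R) (hinj : Injective m)
    (hrange : Set.range m = {M : Ideal R | M.IsMaximal ∧ J ≤ M ∧ ¬ I ≤ M}) :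
    ∃ k : ℕ, 0 < k ∧ ∀ l : ℕ, k ≤ l →
      (∃ e : (R ⧸ J) ≃ₐ[S] (R ⧸ (J + I ^ l)) × (∀ i, R ⧸ (J + m i ^ l)),
        ∀ f : R, e (Ideal.Quotient.mk J f) =
          (Ideal.Quotient.mk (J + I ^ l) f, fun i => Ideal.Quotient.mk (J + m i ^ l) f)) ∧
      J = (J + I ^ l) ⊓ ⨅ i, (J + m i ^ l) := by
  have := Fintype.ofFinite ι
  have hmem (i : ι) : (m i).IsMaximal ∧ J ≤ m i ∧ ¬ I ≤ m i := hrange.subset ⟨i, rfl⟩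
  obtain ⟨k, hk, hle⟩ := exists_pow_mul_prod_pow_le (mul_prod_le_radical hrange.superset)
  refine ⟨k, hk, fun l hl => ?_⟩
  have hIm : IsCoprime (I ^ l) (∏ i, m i ^ l) := IsCoprime.prod_right fun i _ =>
    (isCoprime_of_isMaximal_of_not_le (hmem i).1 (hmem i).2.2).pow
  have hmm : Pairwise (IsCoprime on fun i => m i ^ l) := fun i j hij =>
    have := (hmem i).1
    have := (hmem j).1
    (Ideal.isCoprime_of_isMaximal (hinj.ne hij)).pow
  have hprod : J + ∏ i, m i ^ l = ⨅ i, (J + m i ^ l) := by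
    simpa using add_prod_eq_iInf_of_pairwise_isCoprime J Finset.univ fun i _ j _ hij => hmm hij
  have hJ : J = (J + I ^ l) ⊓ ⨅ i, (J + m i ^ l) := by
    rw [← hprod, ← add_mul_eq_inf_of_isCoprime J hIm]
    exact (sup_eq_left.mpr (hle l hl)).symm
  exact ⟨⟨(Ideal.quotientEquivAlgOfEq S hJ).trans <| quotientInfIInfEquivProdPi S _ _
    (hprod ▸ isCoprime_add_add J hIm) fun i j hij => isCoprime_add_add J (hmm hij),
    fun _ => rfl⟩, hJ⟩

end CommRing

theorem ker_eval_eq_span {R σ : Type*} [CommRing R] (p : σ → R) :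
    RingHom.ker (eval p) = Ideal.span (Set.range fun i => X i - C (p i)) := by
  set m := Ideal.span (Set.range fun i => X i - C (p i))
  have hmk : Ideal.Quotient.mk m = (Ideal.Quotient.mk m).comp (C.comp (eval p)) := by
    ext i
    · simp
    · simpa using Ideal.Quotient.eq.mpr (Ideal.subset_span ⟨i, rfl⟩ : X i - C (p i) ∈ m)
  apply le_antisymm
  · intro f hf
    rw [← Ideal.Quotient.eq_zero_iff_mem, hmk]
    simp [RingHom.mem_ker.mp hf]
  · rw [Ideal.span_le]
    rintro _ ⟨i, rfl⟩
    simp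

section ComplexPolynomials

variable {n : ℕ}

theorem mIdeal_eq_vanishingIdeal (p : Fin n → ℂ) : mIdeal p = vanishingIdeal ℂ {p} := by
  ext f
  rw [mIdeal, ← ker_eval_eq_span, RingHom.mem_ker, mem_vanishingIdeal_singleton_iff,
    aeval_eq_eval]

theorem le_mIdeal_iff {S : Ideal (MvPolynomial (Fin n) ℂ)} {p : Fin n → ℂ} :
    S ≤ mIdeal p ↔ p ∈ zeroSet S := by
  rw [mIdeal, ← ker_eval_eq_span]
  rfl

theorem isMaximal_iff_mem_range_mIdeal {M : Ideal (MvPolynomial (Fin n) ℂ)} :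
    M.IsMaximal ↔ M ∈ Set.range mIdeal := by
  simp only [isMaximal_iff_eq_vanishingIdeal_singleton, Set.mem_range, mIdeal_eq_vanishingIdeal,
    eq_comm]

theorem mIdeal_injective : Injective (mIdeal (n := n)) := by
  intro p q hpq
  have hq : q ∈ zeroSet (mIdeal p) := le_mIdeal_iff.mp hpq.le
  funext i
  have := hq (X i - C (p i)) (Ideal.subset_span ⟨i, rfl⟩)
  simpa [sub_eq_zero, eq_comm] using this

theorem image_mIdeal_zeroSet_diff (J I : Ideal (MvPolynomial (Fin n) ℂ)) :
    mIdeal '' (zeroSet J \ zeroSet I) = {M | M.IsMaximal ∧ J ≤ M ∧ ¬ I ≤ M} := by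
  ext M
  constructor
  · rintro ⟨p, ⟨hJ, hI⟩, rfl⟩
    exact ⟨isMaximal_iff_mem_range_mIdeal.mpr ⟨p, rfl⟩, le_mIdeal_iff.mpr hJ,
      le_mIdeal_iff.not.mpr hI⟩
  · rintro ⟨hM, hJ, hI⟩
    obtain ⟨p, rfl⟩ := isMaximal_iff_mem_range_mIdeal.mp hM
    exact ⟨p, ⟨le_mIdeal_iff.mp hJ, le_mIdeal_iff.not.mp hI⟩, rfl⟩

end ComplexPolynomials

/-- Proposition 1: there is a positive integer `k` (and the same holds for any
larger integer `l`) such that the natural map induces a `ℂ`-algebra isomorphism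
`ℂ[x]/J ≅ ℂ[x]/(J+Iˡ) × ∏ᵢ ℂ[x]/(J+m_{pᵢ}ˡ)`; in particular
`J = (J+Iˡ) ∩ ⋂ᵢ (J+m_{pᵢ}ˡ)`. -/
theorem stmt_0 {n : ℕ} (J I : Ideal (MvPolynomial (Fin n) ℂ)) (hJI : J ≤ I)
    (hfin : FiniteDimensional ℂ (MvPolynomial (Fin n) ℂ ⧸ J.colon I))
    (s : ℕ) (p : Fin s → (Fin n → ℂ)) (hinj : Function.Injective p)
    (hrange : Set.range p = zeroSet J \ zeroSet I) :
    ∃ k : ℕ, 0 < k ∧ ∀ l : ℕ, k ≤ l →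
      (∃ e : (MvPolynomial (Fin n) ℂ ⧸ J) ≃ₐ[ℂ]
          (MvPolynomial (Fin n) ℂ ⧸ (J + I ^ l)) ×
          (∀ i : Fin s, MvPolynomial (Fin n) ℂ ⧸ (J + mIdeal (p i) ^ l)),
        ∀ f : MvPolynomial (Fin n) ℂ,
          e (Ideal.Quotient.mk J f) =
            (Ideal.Quotient.mk (J + I ^ l) f,
             fun i => Ideal.Quotient.mk (J + mIdeal (p i) ^ l) f)) ∧
      J = (J + I ^ l) ⊓ ⨅ i : Fin s, (J + mIdeal (p i) ^ l) := by
  refine stmt_0_general ℂ J I (mIdeal ∘ p) (mIdeal_injective.comp hinj) ?_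
  rw [Set.range_comp, hrange, image_mIdeal_zeroSet_diff]
end

section
/- Let J ⊆ I be ideals in ℂ[x] = ℂ[x₁,…,xₙ] with dim_ℂ ℂ[x]/(J:I) < ∞ and (J:I) + I = ℂ[x], and let {p₁,…,pₛ} = V(J) \ V(I). Then for all sufficiently large positive integers k, J:I = ⋂_{i=1}^{s} (J + m_{pᵢ}ᵏ). -/
open MvPolynomial

/-!
Since `J:I` and `I` are comaximal, `V(J:I) = V(J) \ V(I) = {p₁, …, pₛ}`, so by the Nullstellensatz
`⋂ᵢ m_{pᵢ}` lies in the radical of `J:I`, and `⋂ᵢ m_{pᵢ}ᵏ = (⋂ᵢ m_{pᵢ})ᵏ ⊆ J:I` for large `k`.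
The powers `m_{pᵢ}ᵏ` are pairwise comaximal, hence `⋂ᵢ (J + m_{pᵢ}ᵏ) = J + ⋂ᵢ m_{pᵢ}ᵏ ⊆ J:I`.
Conversely `m_{pᵢ}ᵏ` is comaximal with `I`, because `pᵢ ∉ V(I)`; multiplying `J:I` by
`m_{pᵢ}ᵏ + I = (1)` gives `J:I ⊆ J + m_{pᵢ}ᵏ`.
-/

section CommSemiring

open Filter Function

variable {R ι : Type*} [CommSemiring R] {I J a : Ideal R}

theorem colon_mul_le (J I : Ideal R) : J.colon I * I ≤ J :=
  Ideal.mul_le.2 fun _ hr _ hs => Submodule.mem_colon.1 hr _ hs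

theorem colon_le_sup_of_isCoprime (h : IsCoprime a I) : J.colon I ≤ J ⊔ a :=
  calc
    J.colon I = J.colon I * a ⊔ J.colon I * I := by
      rw [← Ideal.mul_sup, h.sup_eq, Ideal.mul_top]
    _ ≤ J ⊔ a := sup_le (le_sup_of_le_right Ideal.mul_le_right)
      (le_sup_of_le_left (colon_mul_le J I))

theorem prod_sup_le_sup_prod (J : Ideal R) (a : ι → Ideal R) (s : Finset ι) :
    ∏ i ∈ s, (J ⊔ a i) ≤ J ⊔ ∏ i ∈ s, a i := by
  classical
  induction s using Finset.induction_on with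
  | empty => simp
  | insert i s hi ih =>
    rw [Finset.prod_insert hi, Finset.prod_insert hi]
    calc
      (J ⊔ a i) * ∏ j ∈ s, (J ⊔ a j) ≤ (J ⊔ a i) * (J ⊔ ∏ j ∈ s, a j) := Ideal.mul_mono_right ih
      _ = (J ⊔ a i) * J ⊔ (J * (∏ j ∈ s, a j) ⊔ a i * ∏ j ∈ s, a j) := by
        rw [Ideal.mul_sup, Ideal.sup_mul (K := ∏ j ∈ s, a j)]
      _ ≤ J ⊔ a i * ∏ j ∈ s, a j :=
        sup_le (le_sup_of_le_left Ideal.mul_le_right) (sup_le_sup_right Ideal.mul_le_left _)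

variable {m : ι → Ideal R}

theorem iInf_eq_prod_of_pairwise_isCoprime [Fintype ι]
    (hm : Pairwise (IsCoprime on m)) : ⨅ i, m i = ∏ i, m i := by
  simpa using (Ideal.prod_eq_iInf_of_pairwise_isCoprime (s := Finset.univ)
    (hm.set_pairwise _)).symm

variable [Finite ι]

theorem iInf_pow_of_pairwise_isCoprime (hm : Pairwise (IsCoprime on m)) (k : ℕ) :
    ⨅ i, m i ^ k = (⨅ i, m i) ^ k := by
  have := Fintype.ofFinite ι
  have hmk : Pairwise (IsCoprime on fun i => m i ^ k) := fun _ _ hij => (hm hij).pow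
  rw [iInf_eq_prod_of_pairwise_isCoprime hm, iInf_eq_prod_of_pairwise_isCoprime hmk,
    Finset.prod_pow]

theorem sup_iInf_of_pairwise_isCoprime (hm : Pairwise (IsCoprime on m)) (J : Ideal R) :
    J ⊔ ⨅ i, m i = ⨅ i, (J ⊔ m i) := by
  have := Fintype.ofFinite ι
  have hJm : Pairwise (IsCoprime on fun i => J ⊔ m i) := fun i j hij =>
    Ideal.isCoprime_iff_codisjoint.2 ((hm hij).codisjoint.mono le_sup_right le_sup_right)
  refine le_antisymm (le_iInf fun i => sup_le_sup_left (iInf_le m i) J) ?_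
  rw [iInf_eq_prod_of_pairwise_isCoprime hm, iInf_eq_prod_of_pairwise_isCoprime hJm]
  exact prod_sup_le_sup_prod J m Finset.univ

theorem colon_eq_iInf_sup_of_isCoprime (hm : Pairwise (IsCoprime on m))
    (hmI : ∀ i, IsCoprime (m i) I) (hle : ⨅ i, m i ≤ J.colon I) :
    J.colon I = ⨅ i, (J ⊔ m i) := by
  refine le_antisymm (le_iInf fun i => colon_le_sup_of_isCoprime (hmI i)) ?_
  rw [← sup_iInf_of_pairwise_isCoprime hm]
  exact sup_le Ideal.le_colon hle

theorem eventually_colon_eq_iInf_sup_pow (hm : Pairwise (IsCoprime on m))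
    (hmI : ∀ i, IsCoprime (m i) I) (hrad : ⨅ i, m i ≤ (J.colon I).radical)
    (hfg : (⨅ i, m i).FG) :
    ∀ᶠ k in atTop, J.colon I = ⨅ i, (J ⊔ m i ^ k) := by
  obtain ⟨K, hK⟩ := Ideal.exists_pow_le_of_le_radical_of_fg hrad hfg
  filter_upwards [eventually_ge_atTop K] with k hk
  refine colon_eq_iInf_sup_of_isCoprime (fun _ _ hij => (hm hij).pow)
    (fun i => (hmI i).pow_left) ?_
  calc
    ⨅ i, m i ^ k = (⨅ i, m i) ^ k := iInf_pow_of_pairwise_isCoprime hm k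
    _ ≤ (⨅ i, m i) ^ K := Ideal.pow_le_pow_right hk
    _ ≤ J.colon I := hK

end CommSemiring

section Field

open Filter Function

variable {σ K : Type*} [Field K] {I J : Ideal (MvPolynomial σ K)}

theorem vanishingIdeal_singleton_eq_span (x : σ → K) :
    vanishingIdeal K {x} = Ideal.span (Set.range fun i => X i - C (x i)) := by
  set M := Ideal.span (Set.range fun i => X i - C (x i))
  have hmk : Ideal.Quotient.mk M = (Ideal.Quotient.mk M).comp (C.comp (eval x)) := by
    refine ringHom_ext (by simp) fun i => ?_
    simpa using Ideal.Quotient.eq.2 (Ideal.subset_span (Set.mem_range_self i) : X i - C (x i) ∈ M)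
  refine le_antisymm (fun f hf => ?_) (Ideal.span_le.2 ?_)
  · have hfx : eval x f = 0 := (mem_vanishingIdeal_singleton_iff x f).1 hf
    rw [← Ideal.Quotient.eq_zero_iff_mem, hmk]
    simp [hfx]
  · rintro _ ⟨i, rfl⟩
    simp

theorem le_vanishingIdeal_singleton_iff {x : σ → K} :
    I ≤ vanishingIdeal K {x} ↔ x ∈ zeroLocus K I :=
  le_zeroLocus_iff_le_vanishingIdeal.symm.trans Set.singleton_subset_iff

theorem zeroLocus_vanishingIdeal_singleton (x : σ → K) :
    zeroLocus K (vanishingIdeal K {x}) = {x} := by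
  ext y
  simp [vanishingIdeal_singleton_eq_span, zeroLocus_span, sub_eq_zero, funext_iff]

theorem isCoprime_vanishingIdeal_singleton_iff {x : σ → K} :
    IsCoprime (vanishingIdeal K {x}) I ↔ x ∉ zeroLocus K I := by
  have hmax : IsCoatom (vanishingIdeal K {x}) := Ideal.isMaximal_def.1 inferInstance
  rw [Ideal.isCoprime_iff_codisjoint, ← hmax.not_le_iff_codisjoint,
    le_vanishingIdeal_singleton_iff]

theorem zeroLocus_colon_of_isCoprime (h : IsCoprime (J.colon I) I) :
    zeroLocus K (J.colon I) = zeroLocus K J \ zeroLocus K I := by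
  ext x
  constructor
  · intro hx
    have hle : J.colon I ≤ vanishingIdeal K {x} := le_vanishingIdeal_singleton_iff.2 hx
    have hxI : IsCoprime (vanishingIdeal K {x}) I :=
      Ideal.isCoprime_iff_codisjoint.2 (h.codisjoint.mono_left hle)
    exact ⟨zeroLocus_anti_mono Ideal.le_colon hx, isCoprime_vanishingIdeal_singleton_iff.1 hxI⟩
  · rintro ⟨hxJ, hxI⟩
    have hle : J.colon I ≤ J ⊔ vanishingIdeal K {x} :=
      colon_le_sup_of_isCoprime (isCoprime_vanishingIdeal_singleton_iff.2 hxI)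
    rwa [sup_eq_right.2 (le_vanishingIdeal_singleton_iff.2 hxJ),
      le_vanishingIdeal_singleton_iff] at hle

theorem stmt_6_general [Finite σ] [IsAlgClosed K] (hcop : IsCoprime (J.colon I) I)
    (hfin : (zeroLocus K J \ zeroLocus K I).Finite) :
    ∀ᶠ k in atTop, J.colon I =
      ⨅ x ∈ zeroLocus K J \ zeroLocus K I, (J ⊔ vanishingIdeal K {x} ^ k) := by
  have := hfin.to_subtype
  have hpair : Pairwise (IsCoprime on
      fun x : ↥(zeroLocus K J \ zeroLocus K I) => vanishingIdeal K {x.1}) := by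
    intro x y hxy
    refine isCoprime_vanishingIdeal_singleton_iff.2 ?_
    rwa [zeroLocus_vanishingIdeal_singleton, Set.mem_singleton_iff, Subtype.coe_inj]
  have hrad : ⨅ x : ↥(zeroLocus K J \ zeroLocus K I), vanishingIdeal K {x.1} ≤
      (J.colon I).radical := by
    rw [← vanishingIdeal_zeroLocus_eq_radical (K := K), zeroLocus_colon_of_isCoprime hcop]
    exact fun f hf x hx => (Ideal.mem_iInf.1 hf ⟨x, hx⟩) x rfl
  simp only [iInf_subtype']
  exact eventually_colon_eq_iInf_sup_pow hpair
    (fun x => isCoprime_vanishingIdeal_singleton_iff.2 x.2.2) hrad (IsNoetherian.noetherian _)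

end Field

/-- Corollary 7: if `(J:I) + I = ℂ[x]` then for all `k` large enough
`J:I = ⋂ᵢ (J + m_{pᵢ}ᵏ)`. -/
theorem stmt_6 {n : ℕ} (J I : Ideal (MvPolynomial (Fin n) ℂ)) (hJI : J ≤ I)
    (hfin : FiniteDimensional ℂ (MvPolynomial (Fin n) ℂ ⧸ J.colon I))
    (hsum : J.colon I + I = ⊤)
    (s : ℕ) (p : Fin s → (Fin n → ℂ)) (hinj : Function.Injective p)
    (hrange : Set.range p = zeroSet J \ zeroSet I) :
    ∃ K : ℕ, 0 < K ∧ ∀ k : ℕ, K ≤ k →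
      J.colon I = ⨅ i : Fin s, (J + mIdeal (p i) ^ k) := by
  have hV : zeroLocus ℂ J \ zeroLocus ℂ I = Set.range p := hrange.symm
  have hK := stmt_6_general (Ideal.isCoprime_iff_sup_eq.2 hsum) (hV ▸ Set.finite_range p)
  simp only [hV, iInf_range, vanishingIdeal_singleton_eq_span] at hK
  exact (Filter.atTop_basis' 1).eventually_iff.1 hK
end

section
/- Let J ⊆ I be ideals in ℂ[x] = ℂ[x₁,…,xₙ] with dim_ℂ ℂ[x]/(J:I) < ∞. Then V(J:I) is finite and V(J) \ V(I) = V(J:I) \ V(I). -/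
open MvPolynomial

/-!
A point of `V(S)` is the same as an algebra homomorphism from the coordinate ring `k[x]/S` to the
field of coordinates, and a finite-dimensional algebra has only finitely many of those. The
polynomials vanishing at a point outside `V(I)` form a prime ideal not containing `I`, and such a
prime contains `J : I` exactly when it contains `J`.
-/

theorem colon_le_iff_of_isPrime {R : Type*} [Semiring R] {J P : Ideal R} [J.IsTwoSided]
    (hP : P.IsPrime) {S : Set R} (hS : ¬S ⊆ P) : J.colon S ≤ P ↔ J ≤ P := by
  refine ⟨Ideal.le_colon.trans, fun hJP f hf => ?_⟩
  obtain ⟨g, hgS, hgP⟩ := Set.not_subset.mp hS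
  have hfg : f * g ∈ P := hJP (Submodule.mem_colon.mp hf g hgS)
  exact (hP.mem_or_mem hfg).resolve_right hgP

section ZeroLocus

variable {σ k K : Type*} [Field k] [Field K] [Algebra k K]

theorem mem_zeroLocus_iff_le_vanishingIdeal_singleton {I : Ideal (MvPolynomial σ k)} {x : σ → K} :
    x ∈ zeroLocus K I ↔ I ≤ vanishingIdeal k {x} := by
  rw [← le_zeroLocus_iff_le_vanishingIdeal, Set.singleton_subset_iff]

variable (K)

theorem finite_zeroLocus (I : Ideal (MvPolynomial σ k))
    [FiniteDimensional k (MvPolynomial σ k ⧸ I)] : (zeroLocus K I).Finite := by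
  let evalAt (x : zeroLocus K I) : (MvPolynomial σ k ⧸ I) →ₐ[k] K :=
    Ideal.Quotient.liftₐ I (aeval x.1) x.2
  have evalAt_X (x : zeroLocus K I) (i : σ) : evalAt x (Ideal.Quotient.mk I (X i)) = x.1 i :=
    aeval_X x.1 i
  have evalAt_injective : Function.Injective evalAt := fun x y hxy =>
    Subtype.ext <| funext fun i => by rw [← evalAt_X x, hxy, evalAt_X y]
  exact Set.finite_coe_iff.mp (Finite.of_injective evalAt evalAt_injective)

theorem zeroLocus_sdiff_eq_zeroLocus_colon_sdiff (J I : Ideal (MvPolynomial σ k)) :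
    zeroLocus K J \ zeroLocus K I = zeroLocus K (J.colon I) \ zeroLocus K I := by
  ext x
  simp only [Set.mem_sdiff, mem_zeroLocus_iff_le_vanishingIdeal_singleton]
  exact and_congr_left fun hI => (colon_le_iff_of_isPrime inferInstance hI).symm

theorem stmt_15_general (J I : Ideal (MvPolynomial σ k))
    [FiniteDimensional k (MvPolynomial σ k ⧸ J.colon I)] :
    (zeroLocus K (J.colon I)).Finite ∧
    zeroLocus K J \ zeroLocus K I = zeroLocus K (J.colon I) \ zeroLocus K I :=
  ⟨finite_zeroLocus K _, zeroLocus_sdiff_eq_zeroLocus_colon_sdiff K J I⟩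

end ZeroLocus

theorem zeroSet_eq_zeroLocus {n : ℕ} (S : Ideal (MvPolynomial (Fin n) ℂ)) :
    zeroSet S = zeroLocus ℂ S := by
  simp only [zeroSet, zeroLocus, aeval_eq_eval]

/-- If `J ⊆ I` and `dim_ℂ ℂ[x]/(J:I) < ∞` then `V(J:I)` is finite and
`V(J) \ V(I) = V(J:I) \ V(I)`. -/
theorem stmt_15 {n : ℕ} (J I : Ideal (MvPolynomial (Fin n) ℂ)) (hJI : J ≤ I)
    (hfin : FiniteDimensional ℂ (MvPolynomial (Fin n) ℂ ⧸ J.colon I)) :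
    (zeroSet (J.colon I)).Finite ∧
    zeroSet J \ zeroSet I = zeroSet (J.colon I) \ zeroSet I := by
  simpa only [zeroSet_eq_zeroLocus] using stmt_15_general ℂ J I
end
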